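/- Let |i⟩ ∈ ℂ² be a unit vector, let p ∈ [0, 1], let p₀, p₁, p₂, p₃ ≥ 0 with Σ_m p_m = 1, let U₀ = I, U₁ = σ₃, U₂ = σ₁, U₃ = −σ₃σ₁, and let ρ_m = U_m†|i⟩⟨i|U_m. Then p·Σ_m p_m U_m ρ_m U_m† + (1−p)·Σ_m p_m (1/4)Σ_{k=0}^{3} U_k ρ_m U_k† = p|i⟩⟨i| + (1−p)·(I/2). Hence if Alice sends the correct message m with probability p and a uniformly random message with probability 1−p, Bob's final state is the mixed qubit p|i⟩⟨i| + (1−p)I/2. -/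

import Mathlib

open Matrix

noncomputable def σ₁ : Matrix (Fin 2) (Fin 2) ℂ := !![0, 1; 1, 0]
noncomputable def σ₃ : Matrix (Fin 2) (Fin 2) ℂ := !![1, 0; 0, -1]

/-- The outer product |ψ⟩⟨ψ| of a vector with itself. -/
noncomputable def outer {n : Type*} (ψ : n → ℂ) : Matrix n n ℂ :=
  Matrix.vecMulVec ψ (star ψ)

/-!
The correct message makes Bob undo `U m` and recover the target state. A uniformly random message
averages the conjugates of his state over the `U k`, which leaves only its trace, and that trace
does not depend on `m`. Hence each branch is constant in `m` and the weights `q m` drop out.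
-/

/-- A finite family of unitary matrices is a unitary one-design if averaging the conjugates of any
matrix over the family gives the multiple of the identity with the same trace. For density matrices
this says that applying a uniformly random member of the family produces the maximally mixed
state. -/
structure IsUnitaryOneDesign {κ n 𝕜 : Type*} [Fintype κ] [Fintype n] [DecidableEq n] [RCLike 𝕜]
    (U : κ → Matrix n n 𝕜) : Prop where
  mem_unitaryGroup : ∀ k, U k ∈ unitaryGroup n 𝕜
  average_conj : ∀ A : Matrix n n 𝕜, (Fintype.card κ : 𝕜)⁻¹ • ∑ k, U k * A * (U k)ᴴ =
    (A.trace / Fintype.card n) • 1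

section UnitaryConjugation

variable {n R : Type*} [Fintype n] [DecidableEq n] [CommRing R] [StarRing R] {V : Matrix n n R}

theorem unitary_conj_conjTranspose_conj (hV : V ∈ unitaryGroup n R) (A : Matrix n n R) :
    V * (Vᴴ * A * V) * Vᴴ = A := by
  have hVV : V * Vᴴ = 1 := mem_unitaryGroup_iff.mp hV
  calc V * (Vᴴ * A * V) * Vᴴ = V * Vᴴ * A * (V * Vᴴ) := by simp only [Matrix.mul_assoc]
    _ = A := by rw [hVV, Matrix.one_mul, Matrix.mul_one]

theorem trace_unitary_conjTranspose_conj (hV : V ∈ unitaryGroup n R) (A : Matrix n n R) :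
    (Vᴴ * A * V).trace = A.trace := by
  have hVV : V * Vᴴ = 1 := mem_unitaryGroup_iff.mp hV
  rw [trace_mul_cycle, hVV, Matrix.one_mul]

end UnitaryConjugation

theorem trace_outer {n : Type*} [Fintype n] (ψ : n → ℂ) :
    (outer ψ).trace = star ψ ⬝ᵥ ψ := by
  rw [outer, trace_vecMulVec, dotProduct_comm]

section Pauli

theorem conjTranspose_σ₁ : σ₁ᴴ = σ₁ := by
  ext a b; fin_cases a <;> fin_cases b <;> simp [σ₁]

theorem conjTranspose_σ₃ : σ₃ᴴ = σ₃ := by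
  ext a b; fin_cases a <;> fin_cases b <;> simp [σ₃]

theorem σ₁_mem_unitaryGroup : σ₁ ∈ unitaryGroup (Fin 2) ℂ := by
  rw [mem_unitaryGroup_iff, star_eq_conjTranspose, conjTranspose_σ₁]
  simp [σ₁, one_fin_two]

theorem σ₃_mem_unitaryGroup : σ₃ ∈ unitaryGroup (Fin 2) ℂ := by
  rw [mem_unitaryGroup_iff, star_eq_conjTranspose, conjTranspose_σ₃]
  simp [σ₃, one_fin_two]

theorem σ₁_conj (A : Matrix (Fin 2) (Fin 2) ℂ) :
    σ₁ * A * σ₁ = !![A 1 1, A 1 0; A 0 1, A 0 0] := by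
  rw [A.eta_fin_two]
  simp [σ₁]

theorem σ₃_conj (A : Matrix (Fin 2) (Fin 2) ℂ) :
    σ₃ * A * σ₃ = !![A 0 0, -A 0 1; -A 1 0, A 1 1] := by
  rw [A.eta_fin_two]
  simp [σ₃]

theorem add_σ₃_conj (A : Matrix (Fin 2) (Fin 2) ℂ) :
    A + σ₃ * A * σ₃ = diagonal fun a => 2 * A a a := by
  rw [σ₃_conj]
  ext a b
  fin_cases a <;> fin_cases b <;> simp [two_mul]

theorem add_σ₁_conj_apply_self (A : Matrix (Fin 2) (Fin 2) ℂ) (a : Fin 2) :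
    (A + σ₁ * A * σ₁) a a = A.trace := by
  rw [σ₁_conj, trace_fin_two]
  fin_cases a <;> simp [add_comm]

/-- The correction unitaries `I, σ₃, σ₁, -σ₃σ₁` that Bob applies on receiving the messages
`0, 1, 2, 3`. -/
noncomputable def pauliCorrection : Fin 4 → Matrix (Fin 2) (Fin 2) ℂ :=
  ![1, σ₃, σ₁, -(σ₃ * σ₁)]

theorem pauliCorrection_mem_unitaryGroup (k : Fin 4) :
    pauliCorrection k ∈ unitaryGroup (Fin 2) ℂ := by
  have neg_mem {V : Matrix (Fin 2) (Fin 2) ℂ} (hV : V ∈ unitaryGroup (Fin 2) ℂ) :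
      -V ∈ unitaryGroup (Fin 2) ℂ := (-(⟨V, hV⟩ : unitaryGroup (Fin 2) ℂ)).2
  fin_cases k
  · exact one_mem _
  · exact σ₃_mem_unitaryGroup
  · exact σ₁_mem_unitaryGroup
  · exact neg_mem (mul_mem σ₃_mem_unitaryGroup σ₁_mem_unitaryGroup)

-- The four-term sum factors: first add the `σ₁`-conjugate, which makes both diagonal entries equal
-- to the trace, then add the `σ₃`-conjugate of the result, which cancels the off-diagonal entries.
theorem sum_pauliCorrection_conj (A : Matrix (Fin 2) (Fin 2) ℂ) :
    ∑ k, pauliCorrection k * A * (pauliCorrection k)ᴴ = (2 * A.trace) • 1 := by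
  let B := A + σ₁ * A * σ₁
  calc ∑ k, pauliCorrection k * A * (pauliCorrection k)ᴴ = B + σ₃ * B * σ₃ := by
        simp only [pauliCorrection, Fin.sum_univ_four, cons_val, conjTranspose_one,
          conjTranspose_neg, conjTranspose_mul, conjTranspose_σ₁, conjTranspose_σ₃, B]
        noncomm_ring
    _ = (2 * A.trace) • 1 := by
        rw [add_σ₃_conj, smul_one_eq_diagonal]
        simp only [B, add_σ₁_conj_apply_self]

theorem isUnitaryOneDesign_pauliCorrection : IsUnitaryOneDesign pauliCorrection where
  mem_unitaryGroup := pauliCorrection_mem_unitaryGroup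
  average_conj A := by
    rw [sum_pauliCorrection_conj, smul_smul, Fintype.card_fin, Fintype.card_fin]
    congr 1
    push_cast
    ring

end Pauli

theorem stmt_10_general {κ n 𝕜 : Type*} [Fintype κ] [Fintype n] [DecidableEq n] [RCLike 𝕜]
    {U : κ → Matrix n n 𝕜} (hU : IsUnitaryOneDesign U) (A : Matrix n n 𝕜) (p : 𝕜)
    {q : κ → 𝕜} (hq : ∑ m, q m = 1) :
    p • ∑ m, q m • (U m * ((U m)ᴴ * A * U m) * (U m)ᴴ) +
        (1 - p) • ∑ m, q m •
          ((Fintype.card κ : 𝕜)⁻¹ • ∑ k, U k * ((U m)ᴴ * A * U m) * (U k)ᴴ) =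
      p • A + (1 - p) • ((A.trace / Fintype.card n) • 1) := by
  have correct_message m : U m * ((U m)ᴴ * A * U m) * (U m)ᴴ = A :=
    unitary_conj_conjTranspose_conj (hU.mem_unitaryGroup m) A
  have random_message m :
      (Fintype.card κ : 𝕜)⁻¹ • ∑ k, U k * ((U m)ᴴ * A * U m) * (U k)ᴴ =
        (A.trace / Fintype.card n) • 1 := by
    rw [hU.average_conj, trace_unitary_conjTranspose_conj (hU.mem_unitaryGroup m)]
  simp only [correct_message, random_message, ← Finset.sum_smul, hq, one_smul]

theorem stmt_10 (iket : Fin 2 → ℂ) (hunit : star iket ⬝ᵥ iket = 1)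
    (p : ℝ) (hp0 : 0 ≤ p) (hp1 : p ≤ 1)
    (q : Fin 4 → ℝ) (hq : ∀ m, 0 ≤ q m) (hqsum : ∑ m : Fin 4, q m = 1) :
    let U : Fin 4 → Matrix (Fin 2) (Fin 2) ℂ := ![1, σ₃, σ₁, -(σ₃ * σ₁)]
    let ρ : Fin 4 → Matrix (Fin 2) (Fin 2) ℂ := fun m => (U m)ᴴ * outer iket * U m
    (p : ℂ) • ∑ m : Fin 4, (q m : ℂ) • (U m * ρ m * (U m)ᴴ) +
        ((1 - p : ℝ) : ℂ) • ∑ m : Fin 4, (q m : ℂ) •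
          ((1 / 4 : ℂ) • ∑ k : Fin 4, U k * ρ m * (U k)ᴴ) =
      (p : ℂ) • outer iket +
        ((1 - p : ℝ) : ℂ) • ((1 / 2 : ℂ) • (1 : Matrix (Fin 2) (Fin 2) ℂ)) := by
  have hq_complex : ∑ m, (q m : ℂ) = 1 := mod_cast hqsum
  simpa [pauliCorrection, trace_outer, hunit] using
    stmt_10_general isUnitaryOneDesign_pauliCorrection (outer iket) p hq_complex
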